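/- arXiv:0803.2428 — 2 statements merged into one kernel-verified Lean document; each statement's English description precedes it below -/
import Mathlib

section
/- Let f be a non-wandering homeomorphism of 𝕋² homotopic to the identity which is an irrational pseudo-rotation, i.e. there exist a lift F and a totally irrational vector ρ ∈ ℝ² (1, ρ₁, ρ₂ linearly independent over ℚ) with lim_{n→∞}(Fⁿ(z) − z)/n = ρ for all z ∈ ℝ². Then f is topologically transitive. -/
open Filter Topology

local notation "⟪" x ", " y "⟫" => @inner ℝ _ _ x y

noncomputable section

/-- Euclidean space `ℝ^d`. -/
abbrev Rd (d : ℕ) := EuclideanSpace ℝ (Fin d)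

/-- The `d`-torus `𝕋^d = ℝ^d/ℤ^d`, realized as a product of circles. -/
abbrev Torus (d : ℕ) := Fin d → AddCircle (1 : ℝ)

/-- The quotient map `π : ℝ^d → 𝕋^d`. -/
def projT {d : ℕ} (z : Rd d) : Torus d := fun i => (z i : AddCircle (1 : ℝ))

/-- An integer vector viewed as an element of `ℝ^d`. -/
def intVec {d : ℕ} (m : Fin d → ℤ) : Rd d := WithLp.toLp 2 (fun i => (m i : ℝ))

/-- A real vector viewed as an element of `ℝ^k`. -/
def vecR {k : ℕ} (ρ : Fin k → ℝ) : Rd k := WithLp.toLp 2 (fun i => ρ i)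

/-- `F : ℝ^d → ℝ^d` is a lift of `f : 𝕋^d → 𝕋^d`:  `π ∘ F = f ∘ π` and
`F (z + m) = F z + m` for every integer vector `m`.  The existence of such a lift
expresses that `f` is homotopic to the identity. -/
def IsLift {d : ℕ} (f : Torus d ≃ₜ Torus d) (F : Rd d ≃ₜ Rd d) : Prop :=
  (∀ z : Rd d, projT (F z) = f (projT z)) ∧
  ∀ (z : Rd d) (m : Fin d → ℤ), F (z + intVec m) = F z + intVec m

/-- The `n`-th iterate (`n ∈ ℤ`) of a homeomorphism. -/
def iterZ {X : Type*} [TopologicalSpace X] (F : X ≃ₜ X) (n : ℤ) : X → X := ⇑(F.toEquiv ^ n)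

/-- `ρ ∈ ℝ^k` is totally irrational: `1, ρ₁, …, ρ_k` are linearly independent over `ℚ`
(equivalently, over `ℤ`). -/
def TotallyIrrational {k : ℕ} (ρ : Fin k → ℝ) : Prop :=
  ∀ (m : Fin k → ℤ) (n : ℤ), (∑ i, (m i : ℝ) * ρ i) = (n : ℝ) → m = 0 ∧ n = 0

/-- `f` (with lift `F`) is a pseudo-rotation with rotation vector `ρ` on the invariant
set `K`: `(Fⁿ z − z)/n → ρ` for every `z ∈ π⁻¹(K)`. -/
def IsPseudoRotationOn {d : ℕ} (F : Rd d ≃ₜ Rd d) (ρ : Rd d) (K : Set (Torus d)) : Prop :=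
  ∀ z : Rd d, projT z ∈ K →
    Tendsto (fun n : ℕ => (n : ℝ)⁻¹ • ((⇑F)^[n] z - z)) atTop (𝓝 ρ)

/-- `f` is non-wandering: no nonempty open set `U` satisfies `fⁿ(U) ∩ U = ∅` for all
`n ≥ 1`. -/
def NonWandering {X : Type*} [TopologicalSpace X] (f : X → X) : Prop :=
  ∀ U : Set X, IsOpen U → U.Nonempty → ∃ n : ℕ, 1 ≤ n ∧ (f^[n] '' U ∩ U).Nonempty

/-- `f` is topologically transitive. -/
def TopTransitive {X : Type*} [TopologicalSpace X] (f : X → X) : Prop :=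
  ∀ U V : Set X, IsOpen U → IsOpen V → U.Nonempty → V.Nonempty →
    ∃ n : ℕ, 1 ≤ n ∧ (f^[n] '' U ∩ V).Nonempty

/-!
Suppose `A` is open and forward invariant and `B` is open and backward invariant under `f`; the
point is that `A` and `B` meet. A generic point of `A`, in the sense of Baire category, is
recurrent, so the path component `D` of `π⁻¹(A)` at a lift of such a point satisfies
`F^[n k] D ∩ (m k + D) ≠ ∅` with `n k → ∞` and `m k / n k → ρ`. If `F^[n] D` meets `m + D` and
`F^[n'] D` meets `m' + D`, then both `F^[n * n'] - n' • m` and `F^[n * n'] - n • m'` map `D` into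
itself, so `D` is invariant under translation by `n • m' - n' • m`. A nonzero integer functional
vanishing on all these differences would give a rational relation satisfied by `ρ`; as `ρ` is
totally irrational, the integer translations preserving `D` therefore have finite index in `ℤ²`.

The same holds for a component `E` of `π⁻¹(B)`. Hence `D` contains a curve at bounded distance from
a horizontal line and `E` a curve at bounded distance from a vertical one. Such curves cross,
because a continuous map of the plane at bounded distance from the identity has a zero.
-/

open scoped Pointwise

theorem exists_eq_zero_of_norm_sub_lt {H : ℂ → ℂ} (hH : Continuous H) {R : ℝ} (hR : 0 < R)
    (hlt : ∀ z, ‖z‖ = R → ‖H z - z‖ < R) : ∃ z, H z = 0 := by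
  -- A zero-free `H` would have a continuous logarithm `L`. On the circle `H z / z` stays in the
  -- slit plane, so `L` minus the single-valued `log (H z / z)` would be a logarithm of `z` there.
  by_contra! hne
  obtain ⟨L, hL, hexp⟩ : ∃ L : ℂ → ℂ, Continuous L ∧ ∀ z, Complex.exp (L z) = H z := by
    obtain ⟨L, ⟨-, hL⟩, -⟩ := Complex.isCoveringMapOn_exp.existsUnique_continuousMap_lifts
      ⟨H, hH⟩ (Complex.exp_log (hne 0)) hne
    exact ⟨L, L.continuous, congrFun hL⟩
  let c (θ : ℝ) : ℂ := circleMap 0 R θ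
  have hc : Continuous c := continuous_circleMap 0 R
  have hc0 (θ : ℝ) : c θ ≠ 0 := circleMap_ne_center hR.ne'
  have hslit (θ : ℝ) : H (c θ) / c θ ∈ Complex.slitPlane := by
    have hnorm : ‖c θ‖ = R := by simp [c, abs_of_pos hR]
    have hquot : ‖(H (c θ) - c θ) / c θ‖ < 1 := by
      rw [norm_div, hnorm, div_lt_one hR]
      exact hlt _ hnorm
    convert Complex.mem_slitPlane_of_norm_lt_one hquot using 1
    field_simp [hc0 θ]
    ring
  let g (θ : ℝ) : ℂ := L (c θ) - Complex.log (H (c θ) / c θ) - θ * Complex.I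
  have hg : Continuous g :=
    ((hL.comp hc).sub (((hH.comp hc).div hc hc0).clog hslit)).sub (by fun_prop)
  have hexpg (θ : ℝ) : Complex.exp (g θ) = R := by
    rw [Complex.exp_sub, Complex.exp_sub, hexp,
      Complex.exp_log (div_ne_zero (hne _) (hc0 θ)), div_div_cancel₀ (hne _)]
    simp [c, circleMap]
  have hperiod : g (2 * Real.pi) = g 0 :=
    Complex.isCoveringMap_exp.const_of_comp hg
      (fun s t => Subtype.ext ((hexpg s).trans (hexpg t).symm)) _ _
  have hc2pi : c (2 * Real.pi) = c 0 := by simp [c, circleMap]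
  simp [g, hc2pi, Real.pi_ne_zero] at hperiod

section PeriodicCurves

variable {V : Type*} [NormedAddCommGroup V] [NormedSpace ℝ V] {D E : Set V} {v w : V}

theorem exists_continuous_mem_norm_sub_smul_le (hD : IsPathConnected D)
    (hv : v ∈ AddAction.stabilizer V D) :
    ∃ (α : ℝ → V) (C : ℝ), Continuous α ∧ (∀ t, α t ∈ D) ∧ ∀ t, ‖α t - t • v‖ ≤ C := by
  obtain ⟨x, hx⟩ := hD.nonempty
  obtain ⟨γ, hγ⟩ := hD.joinedIn x hx (v + x) ((AddAction.mem_stabilizer_set.1 hv x).2 hx)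
  let u : AddCircle (1 : ℝ) → V := AddCircle.liftIco 1 0 fun t => γ.extend t - t • v
  have hu : Continuous u := AddCircle.liftIco_continuous (by simp) (by fun_prop)
  obtain ⟨C, hC⟩ := isCompact_univ.exists_bound_of_continuousOn hu.continuousOn
  refine ⟨fun t => u t + t • v, C, by fun_prop, fun t => ?_, fun t => ?_⟩
  · have hfract : u t = γ.extend (Int.fract t) - Int.fract t • v := by
      rw [← AddCircle.coe_fract]
      exact AddCircle.liftIco_zero_coe_apply ⟨Int.fract_nonneg t, Int.fract_lt_one t⟩
    have hfloor : u t + t • v = ⌊t⌋ • v +ᵥ γ.extend (Int.fract t) := by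
      nth_rewrite 2 [← Int.floor_add_fract t]
      rw [hfract, add_smul, Int.cast_smul_eq_zsmul, vadd_eq_add]
      abel
    beta_reduce
    rw [hfloor, AddAction.mem_stabilizer_set.1 (zsmul_mem hv _)]
    exact hγ _
  · simpa using hC t (Set.mem_univ _)

theorem inter_nonempty_of_linearIndependent_stabilizer (hV : Module.finrank ℝ V = 2)
    (hD : IsPathConnected D) (hE : IsPathConnected E) (hv : v ∈ AddAction.stabilizer V D)
    (hw : w ∈ AddAction.stabilizer V E) (hvw : LinearIndependent ℝ ![v, w]) :
    (D ∩ E).Nonempty := by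
  obtain ⟨α, C, hα, hαD, hαC⟩ := exists_continuous_mem_norm_sub_smul_le hD hv
  obtain ⟨β, C', hβ, hβE, hβC⟩ := exists_continuous_mem_norm_sub_smul_le hE hw
  have : FiniteDimensional ℝ V := Module.finite_of_finrank_eq_succ hV
  let b := basisOfLinearIndependentOfCardEqFinrank hvw (by simp [hV])
  let Φ : V ≃L[ℝ] ℂ := (b.equiv Complex.basisOneI (Equiv.refl _)).toContinuousLinearEquiv
  have hΦv : Φ v = 1 := by simpa [b, Φ] using b.equiv_apply 0 Complex.basisOneI (Equiv.refl _)
  have hΦw : Φ w = Complex.I := by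
    simpa [b, Φ] using b.equiv_apply 1 Complex.basisOneI (Equiv.refl _)
  have hΦ (z : ℂ) : Φ (z.re • v + z.im • w) = z := by simp [hΦv, hΦw]
  -- The sign of `z.im` makes `H` a bounded perturbation of the identity.
  let H (z : ℂ) : ℂ := Φ (α z.re - β (-z.im))
  have hH : Continuous H := by fun_prop
  have hHz (z : ℂ) : ‖H z - z‖ ≤ ‖(Φ : V →L[ℝ] ℂ)‖ * (C + C') :=
    calc ‖H z - z‖ = ‖Φ ((α z.re - z.re • v) - (β (-z.im) - (-z.im) • w))‖ := by
          nth_rewrite 2 [← hΦ z]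
          rw [← map_sub]
          congr 2
          module
      _ ≤ ‖(Φ : V →L[ℝ] ℂ)‖ * ‖(α z.re - z.re • v) - (β (-z.im) - (-z.im) • w)‖ :=
          (Φ : V →L[ℝ] ℂ).le_opNorm _
      _ ≤ ‖(Φ : V →L[ℝ] ℂ)‖ * (C + C') := by
          gcongr
          exact (norm_sub_le _ _).trans (add_le_add (hαC _) (hβC _))
  obtain ⟨z, hz⟩ := exists_eq_zero_of_norm_sub_lt hH
    (add_pos_of_nonneg_of_pos ((norm_nonneg _).trans (hHz 0)) one_pos)
    fun z _ => (hHz z).trans_lt (lt_add_one _)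
  have hmeet : α z.re = β (-z.im) := sub_eq_zero.1 (Φ.map_eq_zero_iff.1 hz)
  exact ⟨α z.re, hαD _, hmeet ▸ hβE _⟩

end PeriodicCurves
theorem mapsTo_pathComponentIn {X : Type*} [TopologicalSpace X] {A : Set X} {x : X} {T : X → X}
    (hT : ContinuousOn T A) (hTA : Set.MapsTo T A A) {y : X} (hy : y ∈ pathComponentIn A x)
    (hTy : T y ∈ pathComponentIn A x) :
    Set.MapsTo T (pathComponentIn A x) (pathComponentIn A x) := fun _ hz =>
  hTy.trans (((hy.symm.trans hz).map_continuousOn hT).mono hTA.image_subset)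

section ReturnTimes

variable {X Γ : Type*} [AddCommGroup Γ] [AddAction Γ X] {A D : Set X} {x : X} {n n' : ℕ} {g g' : Γ}

/-- After `n` iterations of `G` the set `D` comes back to meet its translate `g + D`: the lifted
version of a return of the image of `D` in a quotient by `Γ`, which records the displacement `g`. -/
def IsReturn (G : X → X) (D : Set X) (n : ℕ) (g : Γ) : Prop :=
  (G^[n] '' D ∩ (g +ᵥ D)).Nonempty

theorem isReturn_iff {G : X → X} : IsReturn G D n g ↔ ∃ y ∈ D, -g +ᵥ G^[n] y ∈ D := by
  simp [IsReturn, Set.Nonempty, Set.mem_vadd_set_iff_neg_vadd_mem]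

theorem commute_neg_vadd {G : X → X} (h : Function.Commute G (g +ᵥ ·)) :
    Function.Commute G (-g +ᵥ ·) :=
  Function.Semiconj.inverses_right h (vadd_neg_vadd g) (neg_vadd_vadd g)

theorem IsReturn.symm {e : X ≃ X} (he : Function.Commute e (g +ᵥ ·)) (h : IsReturn e D n g) :
    IsReturn e.symm D n (-g) := by
  obtain ⟨y, hy, hy'⟩ := isReturn_iff.1 h
  refine isReturn_iff.2 ⟨_, hy', ?_⟩
  have hcomm := (commute_neg_vadd he).iterate_left n y
  beta_reduce at hcomm
  rwa [neg_neg, ← hcomm, Function.LeftInverse.iterate e.symm_apply_apply, vadd_neg_vadd]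

variable [TopologicalSpace X] [ContinuousConstVAdd Γ X]

theorem mem_stabilizer_pathComponentIn (hg : g ∈ AddAction.stabilizer Γ A) {y : X}
    (hy : y ∈ pathComponentIn A x) (hgy : g +ᵥ y ∈ pathComponentIn A x) :
    g ∈ AddAction.stabilizer Γ (pathComponentIn A x) := by
  have hneg := mapsTo_pathComponentIn (T := (-g +ᵥ ·)) (by fun_prop)
    (fun z => (AddAction.mem_stabilizer_set.1 (neg_mem hg) z).2) hgy (by simpa using hy)
  exact AddAction.mem_stabilizer_set.2 fun z =>
    ⟨fun hz => by simpa using hneg hz, fun hz => mapsTo_pathComponentIn (T := (g +ᵥ ·))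
      (by fun_prop) (fun z => (AddAction.mem_stabilizer_set.1 hg z).2) hy hgy hz⟩

theorem IsReturn.mapsTo_nsmul {G : X → X} (h : IsReturn G (pathComponentIn A x) n g)
    (hG : Continuous G) (hGA : Set.MapsTo G A A) (hg : g ∈ AddAction.stabilizer Γ A)
    (hGg : Function.Commute G (g +ᵥ ·)) (k : ℕ) :
    Set.MapsTo (fun z => k • -g +ᵥ G^[n * k] z) (pathComponentIn A x) (pathComponentIn A x) := by
  obtain ⟨y, hy, hy'⟩ := isReturn_iff.1 h
  have hT : Set.MapsTo ((-g +ᵥ ·) ∘ G^[n]) (pathComponentIn A x) (pathComponentIn A x) :=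
    mapsTo_pathComponentIn ((hG.iterate n).const_vadd (-g)).continuousOn
      (fun z hz => (AddAction.mem_stabilizer_set.1 (neg_mem hg) _).2 (hGA.iterate n hz)) hy hy'
  have hiter := hT.iterate k
  rwa [((commute_neg_vadd hGg).symm.iterate_right n).comp_iterate, ← Function.iterate_mul,
    vadd_iterate] at hiter

theorem IsReturn.sub_mem_stabilizer {G : X → X} (h : IsReturn G (pathComponentIn A x) n g)
    (h' : IsReturn G (pathComponentIn A x) n' g') (hG : Continuous G) (hGA : Set.MapsTo G A A)
    (hg : g ∈ AddAction.stabilizer Γ A) (hg' : g' ∈ AddAction.stabilizer Γ A)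
    (hGg : Function.Commute G (g +ᵥ ·)) (hGg' : Function.Commute G (g' +ᵥ ·)) :
    n • g' - n' • g ∈ AddAction.stabilizer Γ (pathComponentIn A x) := by
  obtain ⟨y, hy, -⟩ := isReturn_iff.1 h
  have hret := h.mapsTo_nsmul hG hGA hg hGg n' hy
  have hret' := h'.mapsTo_nsmul hG hGA hg' hGg' n hy
  refine mem_stabilizer_pathComponentIn
    (sub_mem (nsmul_mem hg' n) (nsmul_mem hg n')) hret' ?_
  convert hret using 1
  rw [vadd_vadd, mul_comm n' n]
  congr 1
  rw [smul_neg, smul_neg]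
  abel

theorem IsReturn.sub_mem_stabilizer_of_homeomorph {F : X ≃ₜ X}
    (h : IsReturn F (pathComponentIn A x) n g) (h' : IsReturn F (pathComponentIn A x) n' g')
    (hFA : Set.MapsTo F A A ∨ Set.MapsTo F.symm A A) (hg : g ∈ AddAction.stabilizer Γ A)
    (hg' : g' ∈ AddAction.stabilizer Γ A) (hFg : Function.Commute F (g +ᵥ ·))
    (hFg' : Function.Commute F (g' +ᵥ ·)) :
    n • g' - n' • g ∈ AddAction.stabilizer Γ (pathComponentIn A x) := by
  rcases hFA with hFA | hFA
  · exact h.sub_mem_stabilizer h' F.continuous hFA hg hg' hFg hFg'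
  · have hsymm {a : Γ} (ha : Function.Commute F (a +ᵥ ·)) :
        Function.Commute F.symm (-a +ᵥ ·) :=
      Function.Commute.symm <| Function.Semiconj.inverses_right
        (f := (-a +ᵥ ·)) (commute_neg_vadd ha).symm F.apply_symm_apply F.symm_apply_apply
    have hmem := (h.symm (e := F.toEquiv) hFg).sub_mem_stabilizer
      (h'.symm (e := F.toEquiv) hFg') F.symm.continuous hFA
      (neg_mem hg) (neg_mem hg') (hsymm hFg) (hsymm hFg')
    simpa [neg_add_eq_sub] using neg_mem hmem

end ReturnTimes

theorem exists_smul_mem_of_dualAnnihilator_eq_bot {R M : Type*} [CommRing R] [IsDomain R]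
    [IsPrincipalIdealRing R] [AddCommGroup M] [Module R M] [Module.Finite R M]
    {S : Submodule R M} (hS : S.dualAnnihilator = ⊥) (v : M) : ∃ a : R, a ≠ 0 ∧ a • v ∈ S := by
  let q : M →ₗ[R] (M ⧸ S) ⧸ Submodule.torsion R (M ⧸ S) := Submodule.mkQ _ ∘ₗ S.mkQ
  have hq : q v = 0 := by
    refine (Module.forall_dual_apply_eq_zero_iff R (q v)).1 fun φ => ?_
    have hφ : φ ∘ₗ q ∈ S.dualAnnihilator := by
      refine (Submodule.mem_dualAnnihilator _).2 fun s hs => ?_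
      simp [q, (Submodule.Quotient.mk_eq_zero S).2 hs]
    rw [hS, Submodule.mem_bot] at hφ
    exact LinearMap.congr_fun hφ v
  obtain ⟨a, ha⟩ := (Submodule.mem_torsion_iff _).1 ((Submodule.Quotient.mk_eq_zero _).1 hq)
  exact ⟨a, nonZeroDivisors.ne_zero a.2, (Submodule.Quotient.mk_eq_zero S).1 ha⟩

section IntegerVectors

variable {d : ℕ}

/-- The inclusion `ℤ^d → ℝ^d` as a group homomorphism, for pulling back subgroups of `ℝ^d`. -/
def intVecHom : (Fin d → ℤ) →+ Rd d :=
  AddMonoidHom.mk' intVec fun m n => by ext i; simp [intVec]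

theorem TotallyIrrational.eq_zero_of_apply_eq {σ : Fin d → ℝ} (hσ : TotallyIrrational σ)
    {φ : Module.Dual ℤ (Fin d → ℤ)} {n : ℕ} (hn : n ≠ 0) {p : ℤ}
    (h : n * ∑ i, (φ (Pi.single i 1) : ℝ) * σ i = p) : φ = 0 := by
  have hzero := (hσ (fun i => n * φ (Pi.single i 1)) p (by
    rw [← h, Finset.mul_sum]
    push_cast
    simp only [mul_assoc])).1
  refine LinearMap.pi_ext' fun i => LinearMap.ext_ring ?_
  simpa [hn] using congrFun hzero i

theorem TotallyIrrational.dualAnnihilator_eq_bot {ι : Type*} {l : Filter ι} [l.NeBot] {σ : Rd d}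
    (hσ : TotallyIrrational fun i => σ i) {S : Submodule ℤ (Fin d → ℤ)} {n : ι → ℕ}
    {m : ι → Fin d → ℤ} (hn : ∀ k, n k ≠ 0) (hS : ∀ j k, n j • m k - n k • m j ∈ S)
    (hlim : Tendsto (fun k => (n k : ℝ)⁻¹ • intVec (m k)) l (𝓝 σ)) : S.dualAnnihilator = ⊥ := by
  refine (Submodule.eq_bot_iff _).2 fun φ hφ => ?_
  obtain ⟨j⟩ := l.nonempty_of_neBot
  let ψ : Rd d →L[ℝ] ℝ := ∑ i, (φ (Pi.single i 1) : ℝ) • EuclideanSpace.proj i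
  have hψ (v : Fin d → ℤ) : ψ (intVec v) = φ v := by
    conv_rhs => rw [← (Pi.basisFun ℤ (Fin d)).sum_repr v]
    simp [ψ, intVec, mul_comm, -zsmul_eq_mul]
  have hann (k : ι) : (n j * φ (m k) : ℝ) = n k * φ (m j) := by
    have hφS := (Submodule.mem_dualAnnihilator φ).1 hφ _ (hS j k)
    rw [map_sub, map_nsmul, map_nsmul, sub_eq_zero] at hφS
    simpa using congrArg (Int.cast : ℤ → ℝ) hφS
  have hratio (k : ι) : n j * ψ ((n k : ℝ)⁻¹ • intVec (m k)) = φ (m j) := by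
    have hnk : (n k : ℝ) ≠ 0 := Nat.cast_ne_zero.2 (hn k)
    rw [map_smul, hψ, smul_eq_mul, mul_left_comm, hann, inv_mul_cancel_left₀ hnk]
  have hσj : n j * ψ σ = φ (m j) := by
    refine tendsto_nhds_unique (((ψ.continuous.tendsto σ).comp hlim).const_mul _) ?_
    simp only [Function.comp_apply, hratio, tendsto_const_nhds_iff]
  exact hσ.eq_zero_of_apply_eq (hn j) (p := φ (m j)) (by simpa [ψ] using hσj)

end IntegerVectors

section Lifts

variable {d : ℕ}

theorem projT_add_intVec (z : Rd d) (m : Fin d → ℤ) : projT (z + intVec m) = projT z := by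
  ext i
  simp [projT, intVec]

theorem exists_eq_add_intVec_of_projT_eq {z w : Rd d} (h : projT z = projT w) :
    ∃ m, z = w + intVec m := by
  have hint (i : Fin d) : ∃ n : ℤ, n • (1 : ℝ) = z i - w i := by
    rw [← AddCircle.coe_eq_zero_iff, AddCircle.coe_sub, sub_eq_zero]
    exact congrFun h i
  choose m hm using hint
  refine ⟨m, ?_⟩
  ext i
  simp [intVec, ← sub_eq_iff_eq_add', ← hm i]

theorem continuous_projT : Continuous (projT : Rd d → Torus d) :=
  continuous_pi fun i =>
    (AddCircle.continuous_mk' 1).comp (EuclideanSpace.proj (𝕜 := ℝ) i).continuous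

theorem surjective_projT : Function.Surjective (projT : Rd d → Torus d) := by
  intro t
  choose z hz using fun i => QuotientAddGroup.mk_surjective (t i)
  exact ⟨WithLp.toLp 2 z, funext hz⟩

theorem isOpenMap_projT : IsOpenMap (projT : Rd d → Torus d) :=
  (IsOpenMap.piMap (fun _ => QuotientAddGroup.isOpenMap_coe)
    (Eventually.of_forall fun _ => QuotientAddGroup.mk_surjective)).comp
    (EuclideanSpace.equiv (Fin d) ℝ).toHomeomorph.isOpenMap

theorem intVec_mem_stabilizer_preimage_projT (m : Fin d → ℤ) (A : Set (Torus d)) :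
    intVec m ∈ AddAction.stabilizer (Rd d) (projT ⁻¹' A) :=
  AddAction.mem_stabilizer_set.2 fun z => by
    rw [Set.mem_preimage, Set.mem_preimage, vadd_eq_add, add_comm, projT_add_intVec]

variable {f : Torus d ≃ₜ Torus d} {F : Rd d ≃ₜ Rd d}

theorem IsLift.semiconj (hF : IsLift f F) : Function.Semiconj projT F f := hF.1

theorem IsLift.symm_semiconj (hF : IsLift f F) : Function.Semiconj projT F.symm f.symm :=
  hF.semiconj.inverses_right F.apply_symm_apply f.symm_apply_apply

theorem IsLift.commute_vadd (hF : IsLift f F) (m : Fin d → ℤ) :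
    Function.Commute F (intVec m +ᵥ ·) := fun z => by
  simpa only [vadd_eq_add, add_comm] using hF.2 z m

end Lifts

section Recurrence

variable {X : Type*} [TopologicalSpace X] {f : X → X}

theorem NonWandering.exists_ge (hf : NonWandering f) (hcont : Continuous f) (N : ℕ) {U : Set X}
    (hU : IsOpen U) (hne : U.Nonempty) : ∃ n ≥ N, (U ∩ f^[n] ⁻¹' U).Nonempty := by
  induction N generalizing U with
  | zero =>
    obtain ⟨n, -, _, ⟨x, hx, rfl⟩, hx'⟩ := hf U hU hne
    exact ⟨n, n.zero_le, x, hx, hx'⟩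
  | succ N ih =>
    obtain ⟨n, hn, _, ⟨x, hx, rfl⟩, hx'⟩ := hf U hU hne
    obtain ⟨n', hn', y, hy, hy'⟩ := ih (hU.inter (hU.preimage (hcont.iterate n))) ⟨x, hx, hx'⟩
    refine ⟨n + n', by omega, y, hy.1, ?_⟩
    rw [Set.mem_preimage, Function.iterate_add_apply]
    exact hy'.2

theorem NonWandering.subset_closure_iUnion (hf : NonWandering f) (hcont : Continuous f) (N : ℕ)
    {U : Set X} (hU : IsOpen U) : U ⊆ closure (⋃ n ≥ N, U ∩ f^[n] ⁻¹' U) := fun x hx => by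
  refine mem_closure_iff.2 fun O hO hxO => ?_
  obtain ⟨n, hn, y, hy, hy'⟩ := hf.exists_ge hcont N (hO.inter hU) ⟨x, hxO, hx⟩
  exact ⟨y, hy.1, Set.mem_iUnion₂.2 ⟨n, hn, hy.2, hy'.2⟩⟩

theorem NonWandering.eventually_residual_mapClusterPt [SecondCountableTopology X]
    (hf : NonWandering f) (hcont : Continuous f) :
    ∀ᶠ x in residual X, MapClusterPt x atTop (fun n => f^[n] x) := by
  have hreturn : ∀ U ∈ TopologicalSpace.countableBasis X, ∀ᶠ x in residual X,
      ∀ N, x ∈ U → ∃ n ≥ N, f^[n] x ∈ U := fun U hU => by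
    refine eventually_countable_forall.2 fun N => ?_
    have hUo : IsOpen U := TopologicalSpace.isOpen_of_mem_countableBasis hU
    have hO : IsOpen (⋃ n ≥ N, U ∩ f^[n] ⁻¹' U) :=
      isOpen_biUnion fun n _ => hUo.inter (hUo.preimage (hcont.iterate n))
    filter_upwards [coborder_mem_residual hO.isLocallyClosed] with x hx hxU
    rw [coborder_eq_union_closure_compl] at hx
    simpa [hxU] using hx.resolve_right fun h => h (hf.subset_closure_iUnion hcont N hUo hxU)
  filter_upwards [(eventually_countable_ball
    (TopologicalSpace.countable_countableBasis X)).2 hreturn] with x hx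
  refine mapClusterPt_iff_frequently.2 fun s hs => frequently_atTop.2 fun N => ?_
  obtain ⟨U, hU, hxU, hUs⟩ :=
    (TopologicalSpace.isBasis_countableBasis X).mem_nhds_iff.1 hs
  obtain ⟨n, hn, hnU⟩ := hx U hU N hxU
  exact ⟨n, hn, hUs hnU⟩

theorem mapsTo_symm_iUnion_preimage_iterate {α : Type*} (e : α ≃ α) (s : Set α) :
    Set.MapsTo e.symm (⋃ n : ℕ, e^[n] ⁻¹' s) (⋃ n : ℕ, e^[n] ⁻¹' s) := fun x hx => by
  obtain ⟨n, hn⟩ := Set.mem_iUnion.1 hx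
  refine Set.mem_iUnion.2 ⟨n + 1, ?_⟩
  rwa [Set.mem_preimage, Function.iterate_succ_apply, e.apply_symm_apply]

theorem topTransitive_of_forall_inter_nonempty {f : X ≃ₜ X}
    (h : ∀ A B : Set X, IsOpen A → IsOpen B → A.Nonempty → B.Nonempty → Set.MapsTo f A A →
      Set.MapsTo f.symm B B → (A ∩ B).Nonempty) : TopTransitive f := fun U V hU hV hUne hVne => by
  obtain ⟨y, hyU, hyV⟩ := h (⋃ n : ℕ, f.symm^[n] ⁻¹' U) (⋃ n : ℕ, f^[n] ⁻¹' (f ⁻¹' V))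
    (isOpen_iUnion fun n => hU.preimage (f.symm.continuous.iterate n))
    (isOpen_iUnion fun n => (hV.preimage f.continuous).preimage (f.continuous.iterate n))
    (hUne.mono (Set.subset_iUnion (fun n : ℕ => f.symm^[n] ⁻¹' U) 0))
    ((hVne.preimage f.surjective).mono (Set.subset_iUnion (fun n : ℕ => f^[n] ⁻¹' (f ⁻¹' V)) 0))
    (mapsTo_symm_iUnion_preimage_iterate f.symm.toEquiv U)
    (mapsTo_symm_iUnion_preimage_iterate f.toEquiv (f ⁻¹' V))
  obtain ⟨i, hi⟩ := Set.mem_iUnion.1 hyU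
  obtain ⟨j, hj⟩ := Set.mem_iUnion.1 hyV
  refine ⟨j + 1 + i, by omega, _, ⟨_, hi, rfl⟩, ?_⟩
  rw [Function.iterate_add_apply, Function.RightInverse.iterate f.apply_symm_apply,
    Function.iterate_succ_apply']
  exact hj

end Recurrence

section RotationVectors

/-- `ρ` is the rotation vector of the point `z`: the mean displacement per iteration along its
forward orbit under `F`. -/
def HasRotationVector {E : Type*} [NormedAddCommGroup E] [NormedSpace ℝ E] (F : E → E)
    (z ρ : E) : Prop :=
  Tendsto (fun n : ℕ => (n : ℝ)⁻¹ • (F^[n] z - z)) atTop (𝓝 ρ)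

theorem HasRotationVector.tendsto_of_norm_sub_le {E ι : Type*} [NormedAddCommGroup E]
    [NormedSpace ℝ E] {F : E → E} {z ρ : E} (h : HasRotationVector F z ρ) {l : Filter ι}
    {n : ι → ℕ} (hn : Tendsto n l atTop) {u : ι → E} {C : ℝ}
    (hC : ∀ k, ‖F^[n k] z - z - u k‖ ≤ C) : Tendsto (fun k => (n k : ℝ)⁻¹ • u k) l (𝓝 ρ) := by
  have hzero : Tendsto (fun k => (n k : ℝ)⁻¹ • (F^[n k] z - z - u k)) l (𝓝 0) :=
    (tendsto_inv_atTop_nhds_zero_nat.comp hn).zero_smul_isBoundedUnder_le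
      (isBoundedUnder_of ⟨C, hC⟩)
  simpa [smul_sub] using (h.comp hn).sub hzero

variable {d : ℕ} {f : Torus d ≃ₜ Torus d} {F : Rd d ≃ₜ Rd d}

theorem IsLift.exists_mem_vadd_of_mapClusterPt (hF : IsLift f F) {z ρ : Rd d}
    (hrec : MapClusterPt (projT z) atTop fun n => f^[n] (projT z)) (hρ : HasRotationVector F z ρ)
    {W : Set (Rd d)} (hW : W ∈ 𝓝 z) :
    ∃ (n : ℕ → ℕ) (m : ℕ → Fin d → ℤ), (∀ k, n k ≠ 0) ∧
      (∀ k, F^[n k] z ∈ intVec (m k) +ᵥ W) ∧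
      Tendsto (fun k => (n k : ℝ)⁻¹ • intVec (m k)) atTop (𝓝 ρ) := by
  have hreturn : ∃ᶠ n in atTop, n ≠ 0 ∧ ∃ m : Fin d → ℤ,
      F^[n] z ∈ intVec m +ᵥ (W ∩ Metric.ball z 1) := by
    have hfreq := mapClusterPt_iff_frequently.1 hrec _
      (isOpenMap_projT.image_mem_nhds (inter_mem hW (Metric.ball_mem_nhds z one_pos)))
    refine (hfreq.and_eventually (eventually_ne_atTop 0)).mono fun n ⟨⟨w, hw, hwz⟩, hn⟩ => ?_
    rw [← hF.semiconj.iterate_right n z] at hwz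
    obtain ⟨m, hm⟩ := exists_eq_add_intVec_of_projT_eq hwz.symm
    exact ⟨hn, m, w, hw, (add_comm _ _).trans hm.symm⟩
  obtain ⟨n, hn, hnz⟩ := extraction_of_frequently_atTop hreturn
  choose hn0 m hm using hnz
  refine ⟨n, m, hn0, fun k => Set.vadd_set_mono Set.inter_subset_left (hm k),
    hρ.tendsto_of_norm_sub_le hn.tendsto_atTop (C := 1) fun k => ?_⟩
  obtain ⟨w, ⟨-, hw⟩, hwz : intVec (m k) + w = F^[n k] z⟩ := hm k
  rw [← hwz, sub_sub, add_comm z, add_sub_add_left_eq_sub, ← dist_eq_norm]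
  exact hw.le

theorem IsLift.exists_smul_mem_stabilizer_pathComponentIn (hF : IsLift f F) {A : Set (Torus d)}
    (hA : IsOpen A) (hfA : Set.MapsTo f A A ∨ Set.MapsTo f.symm A A) {z ρ : Rd d}
    (hz : projT z ∈ A) (hrec : MapClusterPt (projT z) atTop fun n => f^[n] (projT z))
    (hρ : TotallyIrrational fun i => ρ i) (hzρ : HasRotationVector F z ρ) (m : Fin d → ℤ) :
    ∃ N : ℤ, N ≠ 0 ∧
      N • intVec m ∈ AddAction.stabilizer (Rd d) (pathComponentIn (projT ⁻¹' A) z) := by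
  let D : Set (Rd d) := pathComponentIn (projT ⁻¹' A) z
  have hDz : D ∈ 𝓝 z :=
    ((hA.preimage continuous_projT).pathComponentIn z).mem_nhds (mem_pathComponentIn_self hz)
  obtain ⟨n, v, hn, hret, hlim⟩ := hF.exists_mem_vadd_of_mapClusterPt hrec hzρ hDz
  have hFA : Set.MapsTo F (projT ⁻¹' A) (projT ⁻¹' A) ∨
      Set.MapsTo F.symm (projT ⁻¹' A) (projT ⁻¹' A) :=
    hfA.imp (fun h w hw => by simpa only [Set.mem_preimage, hF.semiconj w] using h hw)
      fun h w hw => by simpa only [Set.mem_preimage, hF.symm_semiconj w] using h hw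
  have hreturn (k : ℕ) : IsReturn F D (n k) (intVec (v k)) :=
    ⟨_, ⟨z, mem_of_mem_nhds hDz, rfl⟩, hret k⟩
  let S : Submodule ℤ (Fin d → ℤ) :=
    AddSubgroup.toIntSubmodule ((AddAction.stabilizer (Rd d) D).comap intVecHom)
  have hS (j k : ℕ) : n j • v k - n k • v j ∈ S := by
    have hsub := (hreturn j).sub_mem_stabilizer_of_homeomorph (hreturn k) hFA
      (intVec_mem_stabilizer_preimage_projT _ _) (intVec_mem_stabilizer_preimage_projT _ _)
      (hF.commute_vadd _) (hF.commute_vadd _)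
    change intVecHom _ ∈ AddAction.stabilizer (Rd d) D
    rwa [map_sub, map_nsmul, map_nsmul]
  obtain ⟨N, hN, hNm⟩ :=
    exists_smul_mem_of_dualAnnihilator_eq_bot (hρ.dualAnnihilator_eq_bot hn hS hlim) m
  refine ⟨N, hN, ?_⟩
  have hmem : intVecHom (N • m) ∈ AddAction.stabilizer (Rd d) D := hNm
  rwa [map_zsmul] at hmem

end RotationVectors

section Transitivity

theorem IsLift.exists_isPathConnected_smul_mem_stabilizer {d : ℕ} {f : Torus d ≃ₜ Torus d}
    {F : Rd d ≃ₜ Rd d} (hF : IsLift f F) (hf : NonWandering f)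
    (hrot : ∀ᶠ z in residual (Rd d), ∃ ρ : Rd d,
      TotallyIrrational (fun i => ρ i) ∧ HasRotationVector F z ρ)
    {A : Set (Torus d)} (hA : IsOpen A) (hne : A.Nonempty)
    (hfA : Set.MapsTo f A A ∨ Set.MapsTo f.symm A A) :
    ∃ D ⊆ projT ⁻¹' A, IsPathConnected D ∧
      ∀ m, ∃ N : ℤ, N ≠ 0 ∧ N • intVec m ∈ AddAction.stabilizer (Rd d) D := by
  have hrec : ∀ᶠ z in residual (Rd d), MapClusterPt (projT z) atTop fun n => f^[n] (projT z) :=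
    (tendsto_residual_of_isOpenMap continuous_projT isOpenMap_projT).eventually
      (hf.eventually_residual_mapClusterPt f.continuous)
  obtain ⟨z, hzA, hz, ρ, hρ, hzρ⟩ := (dense_of_mem_residual (hrec.and hrot)).inter_open_nonempty
    _ (hA.preimage continuous_projT) (hne.preimage surjective_projT)
  exact ⟨pathComponentIn (projT ⁻¹' A) z, pathComponentIn_subset,
    isPathConnected_pathComponentIn hzA,
    hF.exists_smul_mem_stabilizer_pathComponentIn hA hfA hzA hz hρ hzρ⟩

theorem linearIndependent_smul_intVec_single {a b : ℤ} (ha : a ≠ 0) (hb : b ≠ 0) :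
    LinearIndependent ℝ
      ![a • intVec (Pi.single 0 1), (b • intVec (Pi.single 1 1) : Rd 2)] := by
  refine LinearIndependent.pair_iff.2 fun s t hst => ?_
  exact ⟨by simpa [intVec, ha] using congrArg (fun v : Rd 2 => v 0) hst,
    by simpa [intVec, hb] using congrArg (fun v : Rd 2 => v 1) hst⟩

theorem statement8_general (f : Torus 2 ≃ₜ Torus 2) (hnw : NonWandering f) (F : Rd 2 ≃ₜ Rd 2)
    (hF : IsLift f F)
    (hrot : ∀ᶠ z in residual (Rd 2), ∃ ρ : Rd 2,
      TotallyIrrational (fun i => ρ i) ∧ HasRotationVector F z ρ) :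
    TopTransitive f := by
  refine topTransitive_of_forall_inter_nonempty fun A B hA hB hAne hBne hfA hfB => ?_
  obtain ⟨D, hDA, hD, hDstab⟩ :=
    hF.exists_isPathConnected_smul_mem_stabilizer hnw hrot hA hAne (.inl hfA)
  obtain ⟨E, hEB, hE, hEstab⟩ :=
    hF.exists_isPathConnected_smul_mem_stabilizer hnw hrot hB hBne (.inr hfB)
  obtain ⟨a, ha, haD⟩ := hDstab (Pi.single 0 1)
  obtain ⟨b, hb, hbE⟩ := hEstab (Pi.single 1 1)
  obtain ⟨z, hzD, hzE⟩ := inter_nonempty_of_linearIndependent_stabilizer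
    finrank_euclideanSpace_fin hD hE haD hbE (linearIndependent_smul_intVec_single ha hb)
  exact ⟨projT z, hDA hzD, hEB hzE⟩

end Transitivity

/-- **Corollary E.**  Any non-wandering irrational pseudo-rotation `f ∈ Homeo₀(𝕋²)` is
topologically transitive. -/
theorem statement8 (f : Torus 2 ≃ₜ Torus 2) (hnw : NonWandering (⇑f))
    (F : Rd 2 ≃ₜ Rd 2) (hF : IsLift f F) (ρ : Rd 2)
    (hρ : TotallyIrrational (fun i => ρ i)) (hpr : IsPseudoRotationOn F ρ Set.univ) :
    TopTransitive (⇑f) :=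
  statement8_general f hnw F hF
    (Eventually.of_forall fun z => ⟨ρ, hρ, hpr z (Set.mem_univ _)⟩)
end
end

section
/- Let f be a non-wandering homeomorphism of 𝕋² homotopic to the identity with lift F, and suppose the rotation set satisfies ρ(F) ⊆ ℝ × {0} and f has bounded mean motion parallel to e² = (0,1). Then there is a unique lift F̃ : 𝔸 → 𝔸 of f to the annulus 𝔸 = 𝕋¹ × ℝ satisfying sup_{n ∈ ℤ, z ∈ 𝔸} |π₂(F̃ⁿ(z)) − π₂(z)| < ∞, and this F̃ is non-wandering. -/
open Filter Topology

local notation "⟪" x ", " y "⟫" => @inner ℝ _ _ x y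

noncomputable section

/-- The open annulus `𝔸 = 𝕋¹ × ℝ`. -/
abbrev Ann := AddCircle (1 : ℝ) × ℝ

/-- `S ⊆ 𝔸` is unbounded from above in the `ℝ`-coordinate. -/
def UnbAbove (S : Set Ann) : Prop := ¬ BddAbove (Prod.snd '' S)

/-- `S ⊆ 𝔸` is unbounded from below in the `ℝ`-coordinate. -/
def UnbBelow (S : Set Ann) : Prop := ¬ BddBelow (Prod.snd '' S)

/-- `S ⊆ 𝔸` is bounded (equivalently, bounded in the `ℝ`-coordinate). -/
def BoundedA (S : Set Ann) : Prop := BddAbove (Prod.snd '' S) ∧ BddBelow (Prod.snd '' S)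

/-- `E ⊆ 𝔸` is essential: no connected component of its complement is unbounded both
above and below. -/
def EssentialA (E : Set Ann) : Prop :=
  ∀ x ∈ Eᶜ, ¬ (UnbAbove (connectedComponentIn Eᶜ x) ∧ UnbBelow (connectedComponentIn Eᶜ x))

/-- An annular continuum: a compact connected set whose complement has exactly two
connected components, both unbounded. -/
def IsAnnularContinuum (E : Set Ann) : Prop :=
  IsCompact E ∧ IsConnected E ∧
  (∀ x ∈ Eᶜ, ¬ BoundedA (connectedComponentIn Eᶜ x)) ∧
  ∃ x y, x ∈ Eᶜ ∧ y ∈ Eᶜ ∧ connectedComponentIn Eᶜ x ≠ connectedComponentIn Eᶜ y ∧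
    ∀ z ∈ Eᶜ, connectedComponentIn Eᶜ z = connectedComponentIn Eᶜ x ∨
      connectedComponentIn Eᶜ z = connectedComponentIn Eᶜ y

/-- A circloid: an annular continuum containing no strictly smaller annular continuum. -/
def IsCircloidA (C : Set Ann) : Prop :=
  IsAnnularContinuum C ∧ ∀ E ⊆ C, IsAnnularContinuum E → E = C

/-- `ℒ(U)`: the connected component of `𝔸 \ cl(U)` unbounded from below (for a
generating set it is unique; in general we take the union of all components of
`𝔸 \ cl(U)` unbounded from below). -/
def lowerComp (U : Set Ann) : Set Ann :=
  {z | z ∈ (closure U)ᶜ ∧ UnbBelow (connectedComponentIn (closure U)ᶜ z)}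

/-- `𝒰(L)`: the connected component of `𝔸 \ cl(L)` unbounded from above. -/
def upperComp (L : Set Ann) : Set Ann :=
  {z | z ∈ (closure L)ᶜ ∧ UnbAbove (connectedComponentIn (closure L)ᶜ z)}

/-- An upper generating set: bounded from below with essential closure. -/
def UpperGen (U : Set Ann) : Prop := BddBelow (Prod.snd '' U) ∧ EssentialA (closure U)

/-- A lower generating set: bounded from above with essential closure. -/
def LowerGen (L : Set Ann) : Prop := BddAbove (Prod.snd '' L) ∧ EssentialA (closure L)

/-- `𝒞⁻(U) = 𝔸 \ (𝒰ℒ(U) ∪ ℒ𝒰ℒ(U))`. -/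
def Cminus (U : Set Ann) : Set Ann :=
  (upperComp (lowerComp U) ∪ lowerComp (upperComp (lowerComp U)))ᶜ

/-- `𝒞⁺(L) = 𝔸 \ (ℒ𝒰(L) ∪ 𝒰ℒ𝒰(L))`. -/
def Cplus (L : Set Ann) : Set Ann :=
  (lowerComp (upperComp L) ∪ upperComp (lowerComp (upperComp L)))ᶜ

/-- The rotation set of `F` on `K`:  all limits `(F^{nᵢ} xᵢ − xᵢ)/nᵢ → ρ` with
`nᵢ ↗ ∞` and `xᵢ ∈ π⁻¹(K)`. -/
def rotSetOn {d : ℕ} (F : Rd d ≃ₜ Rd d) (K : Set (Torus d)) : Set (Rd d) :=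
  {ρ | ∃ (n : ℕ → ℕ) (x : ℕ → Rd d), StrictMono n ∧ (∀ i, projT (x i) ∈ K) ∧
    Tendsto (fun i => (n i : ℝ)⁻¹ • ((⇑F)^[n i] (x i) - x i)) atTop (𝓝 ρ)}

/-- The affine hyperplane `lam • v + {v}^⊥`. -/
def affHyp {d : ℕ} (v : Rd d) (lam : ℝ) : Set (Rd d) :=
  {w | ∃ u : Rd d, ⟪u, v⟫ = 0 ∧ w = lam • v + u}

/-- Bounded mean motion parallel to `v` on `K`:  `|⟨Fⁿ z − z − n ρ, v⟩| ≤ c` for all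
`n ∈ ℤ` and `z ∈ π⁻¹(K)`, where `ρ = lam • v` is a point of the hyperplane
`lam • v + {v}^⊥` containing the rotation set (the value of the inner product does
not depend on the choice of `ρ` in this hyperplane). -/
def BddMeanMotionParallelOn {d : ℕ} (F : Rd d ≃ₜ Rd d) (v : Rd d) (lam : ℝ)
    (K : Set (Torus d)) : Prop :=
  ∃ c : ℝ, 0 < c ∧ ∀ (n : ℤ) (z : Rd d), projT z ∈ K →
    |⟪iterZ F n z - z - (n : ℝ) • (lam • v), v⟫| ≤ c

/-- The covering map `τ : 𝔸 → 𝕋²`. -/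
def tauA (z : Ann) : Torus 2 := ![z.1, (z.2 : AddCircle (1 : ℝ))]

/-- `Ft` is a lift of `f : 𝕋² → 𝕋²` to the annulus: `τ ∘ Ft = f ∘ τ`. -/
def IsLiftToAnn (f : Torus 2 ≃ₜ Torus 2) (Ft : Ann ≃ₜ Ann) : Prop :=
  ∀ z : Ann, tauA (Ft z) = f (tauA z)

/-- The vertical displacements of all iterates of `Ft` are uniformly bounded. -/
def VertBounded (Ft : Ann ≃ₜ Ann) : Prop :=
  ∃ c : ℝ, ∀ (n : ℤ) (z : Ann), |(iterZ Ft n z).2 - z.2| ≤ c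

/-!
Both `ℝ² → 𝕋²` and `τ` are coverings, so along each of their deck transformations the vertical
displacement of a lift changes by a constant integer. A bounded function cannot have a nonzero
constant increment, so a bounded vertical displacement is invariant under deck transformations.
Hence `F` descends to `𝔸`, and a vertically bounded lift `F̃` commutes with the deck
transformations of `τ`; the difference of the heights of two such lifts along an orbit grows
linearly, and is bounded only if the lifts agree.

If `f` is non-wandering, a small open set contains a point with arbitrarily many return times.
Along the lifted orbit each return lands in a vertical translate of the small set, and only
finitely many translates are within reach. Two returns therefore land in the same translate, which
gives a return of `F̃`.
-/

section Displacement

theorem increment_eq_zero_of_bounded {X : Type*} {T : X → X} {δ : X → ℝ} {a c : ℝ}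
    (hT : ∀ x, δ (T x) = δ x + a) (hδ : ∀ x, |δ x| ≤ c) (x : X) : a = 0 := by
  by_contra ha
  obtain ⟨n, hn⟩ := exists_lt_nsmul (abs_pos.2 ha) (c + c)
  have hiterate : δ (T^[n] x) = δ x + n • a := by
    have hsemi : Function.Semiconj δ T (· + a) := hT
    simpa only [add_right_iterate] using hsemi.iterate_right n x
  have hbound : n • |a| ≤ c + c :=
    calc n • |a| = |δ (T^[n] x) - δ x| := by rw [hiterate, add_sub_cancel_left, abs_nsmul]
      _ ≤ |δ (T^[n] x)| + |δ x| := abs_sub _ _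
      _ ≤ c + c := add_le_add (hδ _) (hδ _)
  exact hn.not_ge hbound

theorem coe_unitAddCircle_eq_coe_iff {x y : ℝ} :
    (x : UnitAddCircle) = y ↔ ∃ k : ℤ, y = x + k := by
  rw [eq_comm, ← sub_eq_zero, ← AddCircle.coe_sub, AddCircle.coe_eq_zero_iff]
  exact exists_congr fun k => by rw [zsmul_one, eq_sub_iff_add_eq', eq_comm]

theorem exists_int_forall_eq_add {X : Type*} [TopologicalSpace X] [ConnectedSpace X]
    {g h : X → ℝ} (hg : Continuous g) (hh : Continuous h)
    (hgh : ∀ x, (g x : UnitAddCircle) = h x) : ∃ k : ℤ, ∀ x, h x = g x + k := by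
  choose k hk using fun x => coe_unitAddCircle_eq_coe_iff.1 (hgh x)
  have hcont : Continuous k := by
    rw [Int.isClosedEmbedding_coe_real.isInducing.continuous_iff]
    exact (hh.sub hg).congr fun x => sub_eq_iff_eq_add'.2 (hk x)
  obtain ⟨x₀⟩ := (inferInstance : Nonempty X)
  exact ⟨k x₀, fun x => by rw [hk x, PreconnectedSpace.constant inferInstance hcont]⟩

/- Here `p` plays the role of a covering map, `T` of a deck transformation and `y` of a coordinate
on the total space. -/
theorem displacement_apply_deck {X B : Type*} [TopologicalSpace X] [ConnectedSpace X]
    {p : X → B} {F T : X → X} {f : B → B} {y : X → ℝ} {c : ℝ}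
    (hFc : Continuous F) (hF : Function.Semiconj p F f)
    (hTc : Continuous T) (hT : ∀ x, p (T x) = p x)
    (hyc : Continuous y) (hy : Function.FactorsThrough (fun x => (y x : UnitAddCircle)) p)
    (hb : ∀ x, |y (F x) - y x| ≤ c) (x : X) :
    y (F (T x)) - y (T x) = y (F x) - y x := by
  have hdisp : Continuous fun x => y (F x) - y x := (hyc.comp hFc).sub hyc
  obtain ⟨k, hk⟩ := exists_int_forall_eq_add hdisp (hdisp.comp hTc) fun x => by
    have hpF : p (F (T x)) = p (F x) := by rw [hF.eq, hT, hF.eq]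
    simp only [Function.comp_apply, AddCircle.coe_sub, hy (hT x), hy hpF]
  rw [← add_zero (y (F x) - y x), ← increment_eq_zero_of_bounded hk hb x]
  exact hk x

end Displacement

section Torus

variable {d : ℕ}

theorem projT_eq_iff {z w : Rd d} : projT z = projT w ↔ ∃ m : Fin d → ℤ, w = z + intVec m := by
  simp only [funext_iff, projT, coe_unitAddCircle_eq_coe_iff, Classical.skolem, PiLp.ext_iff,
    PiLp.add_apply, intVec]

theorem displacement_eq_of_projT_eq {f : Torus d → Torus d} {F : Rd d → Rd d}
    (hFc : Continuous F) (hF : Function.Semiconj projT F f) {i : Fin d} {c : ℝ}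
    (hb : ∀ z, |F z i - z i| ≤ c) {z w : Rd d} (hzw : projT z = projT w) :
    F w i - w i = F z i - z i := by
  obtain ⟨m, rfl⟩ := projT_eq_iff.1 hzw
  exact displacement_apply_deck (y := fun z => z i) hFc hF (T := (· + intVec m)) (by fun_prop)
    (fun z => (projT_eq_iff.2 ⟨m, rfl⟩).symm) (by fun_prop) (fun _ _ h => congrFun h i) hb z

end Torus

section Annulus

/-- The deck transformation of `τ : 𝔸 → 𝕋²` that raises the height by `k`. -/
def deckA (k : ℤ) (z : Ann) : Ann := (z.1, z.2 + k)

theorem continuous_deckA (k : ℤ) : Continuous (deckA k) := by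
  unfold deckA
  fun_prop

theorem tauA_eq_iff_fst_snd {z w : Ann} :
    tauA z = tauA w ↔ z.1 = w.1 ∧ (z.2 : UnitAddCircle) = w.2 := by
  simp only [funext_iff, Fin.forall_fin_two, tauA, Matrix.cons_val_zero, Matrix.cons_val_one]

theorem tauA_eq_iff {z w : Ann} : tauA z = tauA w ↔ ∃ k : ℤ, w = deckA k z := by
  simp only [tauA_eq_iff_fst_snd, coe_unitAddCircle_eq_coe_iff, Prod.ext_iff, deckA,
    exists_and_left, eq_comm]

theorem tauA_deckA (k : ℤ) (z : Ann) : tauA (deckA k z) = tauA z :=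
  (tauA_eq_iff.2 ⟨k, rfl⟩).symm

theorem isOpenMap_tauA : IsOpenMap tauA :=
  Homeomorph.finTwoArrow.symm.isOpenMap.comp
    (IsOpenMap.id.prodMap (QuotientAddGroup.isOpenMap_coe (G := ℝ)))

/-- The covering map `ℝ² → 𝔸`. -/
def planeToAnn (z : Rd 2) : Ann := (z 0, z 1)

theorem isQuotientMap_planeToAnn : IsQuotientMap planeToAnn :=
  ((QuotientAddGroup.isOpenQuotientMap_mk (G := ℝ)).prodMap IsOpenQuotientMap.id |>.comp
    ((EuclideanSpace.equiv (Fin 2) ℝ).toHomeomorph.trans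
      Homeomorph.finTwoArrow).isOpenQuotientMap).isQuotientMap

theorem tauA_planeToAnn (z : Rd 2) : tauA (planeToAnn z) = projT z :=
  funext <| Fin.forall_fin_two.2 ⟨rfl, rfl⟩

theorem planeToAnn_eq_iff {z w : Rd 2} :
    planeToAnn z = planeToAnn w ↔ projT z = projT w ∧ z 1 = w 1 := by
  refine ⟨fun h => ⟨?_, congrArg Prod.snd h⟩, fun h => Prod.ext (congrFun h.1 0) h.2⟩
  rw [← tauA_planeToAnn, h, tauA_planeToAnn]

end Annulus

section Iterates

theorem iterZ_natCast {X : Type*} [TopologicalSpace X] (F : X ≃ₜ X) (n : ℕ) :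
    iterZ F n = F^[n] := by
  rw [iterZ, zpow_natCast]
  exact (Equiv.Perm.iterate_eq_pow F.toEquiv n).symm

theorem iterZ_semiconj {X Y : Type*} [TopologicalSpace X] [TopologicalSpace Y] {F : X ≃ₜ X}
    {G : Y ≃ₜ Y} {q : X → Y} (h : Function.Semiconj q F G) (n : ℤ) :
    Function.Semiconj q (iterZ F n) (iterZ G n) := by
  have hnat (n : ℕ) : Function.Semiconj q (iterZ F n) (iterZ G n) := by
    simpa only [iterZ_natCast] using h.iterate_right n
  obtain ⟨n, rfl | rfl⟩ := n.eq_nat_or_neg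
  · exact hnat n
  · simp only [iterZ, zpow_neg]
    exact (hnat n).inverses_right (Equiv.right_inv _) (Equiv.left_inv _)

theorem VertBounded.exists_iterate_bound {G : Ann ≃ₜ Ann} (hG : VertBounded G) :
    ∃ c : ℝ, ∀ (n : ℕ) (z : Ann), |(G^[n] z).2 - z.2| ≤ c :=
  hG.imp fun _ hc n z => by simpa only [iterZ_natCast] using hc n z

theorem BddMeanMotionParallelOn.exists_vertical_bound {F : Rd 2 ≃ₜ Rd 2}
    (hF : BddMeanMotionParallelOn F (intVec ![0, 1]) 0 Set.univ) :
    ∃ c : ℝ, ∀ (n : ℤ) (z : Rd 2), |iterZ F n z 1 - z 1| ≤ c := by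
  obtain ⟨c, -, hc⟩ := hF
  refine ⟨c, fun n z => ?_⟩
  simpa [intVec, PiLp.inner_apply, Fin.sum_univ_two] using hc n z trivial

end Iterates

section Existence

theorem exists_homeomorph_semiconj {X Y : Type*} [TopologicalSpace X] [TopologicalSpace Y]
    {q : X → Y} (hq : IsQuotientMap q) (F : X ≃ₜ X) (hF : Function.FactorsThrough (q ∘ F) q)
    (hF' : Function.FactorsThrough (q ∘ F.symm) q) :
    ∃ G : Y ≃ₜ Y, Function.Semiconj q F G := by
  let qC : C(X, Y) := ⟨q, hq.continuous⟩
  let qF : C(X, Y) := qC.comp ⟨F, F.continuous⟩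
  let qF' : C(X, Y) := qC.comp ⟨F.symm, F.symm.continuous⟩
  have hqC : IsQuotientMap qC := hq
  let g : C(Y, Y) := hqC.lift qF hF
  let g' : C(Y, Y) := hqC.lift qF' hF'
  have hg (x : X) : g (q x) = q (F x) := DFunLike.congr_fun (hqC.lift_comp qF hF) x
  have hg' (x : X) : g' (q x) = q (F.symm x) := DFunLike.congr_fun (hqC.lift_comp qF' hF') x
  refine ⟨⟨⟨g, g', hq.surjective.forall.2 fun x => ?_, hq.surjective.forall.2 fun x => ?_⟩,
    g.continuous, g'.continuous⟩, fun x => (hg x).symm⟩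
  · rw [hg, hg', F.symm_apply_apply]
  · rw [hg', hg, F.apply_symm_apply]

theorem factorsThrough_planeToAnn_comp {f : Torus 2 → Torus 2} {F : Rd 2 → Rd 2}
    (hFc : Continuous F) (hF : Function.Semiconj projT F f) {c : ℝ}
    (hb : ∀ z, |F z 1 - z 1| ≤ c) : Function.FactorsThrough (planeToAnn ∘ F) planeToAnn := by
  intro z w hzw
  obtain ⟨hproj, hheight⟩ := planeToAnn_eq_iff.1 hzw
  refine planeToAnn_eq_iff.2 ⟨by rw [hF.eq, hF.eq, hproj], ?_⟩
  linarith [displacement_eq_of_projT_eq hFc hF hb hproj]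

theorem exists_annulus_homeomorph_semiconj {f : Torus 2 ≃ₜ Torus 2} {F : Rd 2 ≃ₜ Rd 2}
    (hF : Function.Semiconj projT F f) {c : ℝ} (hb : ∀ z, |F z 1 - z 1| ≤ c) :
    ∃ G : Ann ≃ₜ Ann, Function.Semiconj planeToAnn F G := by
  have hFsymm : Function.Semiconj projT F.symm f.symm :=
    hF.inverses_right F.apply_symm_apply f.symm_apply_apply
  have hbsymm (z : Rd 2) : |F.symm z 1 - z 1| ≤ c := by
    simpa only [F.apply_symm_apply, abs_sub_comm] using hb (F.symm z)
  exact exists_homeomorph_semiconj isQuotientMap_planeToAnn F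
    (factorsThrough_planeToAnn_comp F.continuous hF hb)
    (factorsThrough_planeToAnn_comp F.symm.continuous hFsymm hbsymm)

theorem exists_isLiftToAnn_vertBounded {f : Torus 2 ≃ₜ Torus 2} {F : Rd 2 ≃ₜ Rd 2}
    (hF : Function.Semiconj projT F f)
    (hbmm : BddMeanMotionParallelOn F (intVec ![0, 1]) 0 Set.univ) :
    ∃ G : Ann ≃ₜ Ann, IsLiftToAnn f G ∧ VertBounded G := by
  obtain ⟨c, hc⟩ := hbmm.exists_vertical_bound
  obtain ⟨G, hG⟩ := exists_annulus_homeomorph_semiconj hF (hc 1)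
  have hsurj := isQuotientMap_planeToAnn.surjective
  refine ⟨G, hsurj.forall.2 fun z => ?_, c, fun n => hsurj.forall.2 fun z => ?_⟩
  · rw [← hG.eq, tauA_planeToAnn, tauA_planeToAnn, hF.eq]
  · rw [← (iterZ_semiconj hG n).eq]
    exact hc n z

end Existence

section Uniqueness

variable {f : Torus 2 ≃ₜ Torus 2} {G G' : Ann ≃ₜ Ann}

theorem IsLiftToAnn.displacement_eq_of_tauA_eq (hG : IsLiftToAnn f G) (hb : VertBounded G)
    {z w : Ann} (hzw : tauA z = tauA w) : (G w).2 - w.2 = (G z).2 - z.2 := by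
  obtain ⟨c, hc⟩ := hb
  obtain ⟨k, rfl⟩ := tauA_eq_iff.1 hzw
  exact displacement_apply_deck G.continuous hG (continuous_deckA k) (tauA_deckA k)
    continuous_snd (fun _ _ h => (tauA_eq_iff_fst_snd.1 h).2) (hc 1) z

theorem IsLiftToAnn.commute_deckA (hG : IsLiftToAnn f G) (hb : VertBounded G) (k : ℤ) :
    Function.Commute (deckA k) G := by
  intro z
  have htau : tauA (G (deckA k z)) = tauA (G z) := by rw [hG, tauA_deckA, hG]
  refine Prod.ext (tauA_eq_iff_fst_snd.1 htau).1.symm ?_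
  have hdisp := hG.displacement_eq_of_tauA_eq hb (tauA_deckA k z).symm
  simp only [deckA] at hdisp ⊢
  linarith

theorem IsLiftToAnn.eq_of_vertBounded (hG : IsLiftToAnn f G) (hG' : IsLiftToAnn f G')
    (hb : VertBounded G) (hb' : VertBounded G') : G = G' := by
  have htau (z : Ann) := tauA_eq_iff_fst_snd.1 ((hG z).trans (hG' z).symm)
  obtain ⟨k, hk⟩ := exists_int_forall_eq_add (by fun_prop) (by fun_prop) fun z => (htau z).2
  let δ (n : ℕ) : ℝ := (G'^[n] 0).2 - (G^[n] 0).2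
  have hstep (n : ℕ) : δ (n + 1) = δ n + k := by
    have hfiber : tauA (G^[n] 0) = tauA (G'^[n] 0) := by
      rw [(Function.Semiconj.iterate_right hG n).eq, (Function.Semiconj.iterate_right hG' n).eq]
    have hdisp := hG.displacement_eq_of_tauA_eq hb hfiber
    simp only [δ, Function.iterate_succ_apply', hk]
    linarith
  obtain ⟨c, hc⟩ := hb.exists_iterate_bound
  obtain ⟨c', hc'⟩ := hb'.exists_iterate_bound
  have hbound (n : ℕ) : |δ n| ≤ c' + c := by
    simpa only [δ, sub_sub_sub_cancel_right] using
      (abs_sub _ _).trans (add_le_add (hc' n 0) (hc n 0))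
  have hk₀ : (k : ℝ) = 0 := increment_eq_zero_of_bounded hstep hbound 0
  exact Homeomorph.ext fun z => Prod.ext (htau z).1 (by rw [hk, hk₀, add_zero])

end Uniqueness

section NonWandering

theorem NonWandering.exists_many_returns {X : Type*} [TopologicalSpace X] {f : X → X}
    (hf : NonWandering f) (hfc : Continuous f) (m : ℕ) {W : Set X} (hW : IsOpen W)
    (hne : W.Nonempty) : ∃ x ∈ W, ∃ s : Finset ℕ, s.card = m ∧ ∀ t ∈ s, f^[t] x ∈ W := by
  induction m generalizing W with
  | zero =>
    obtain ⟨x, hx⟩ := hne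
    exact ⟨x, hx, ∅, rfl, by simp⟩
  | succ m ih =>
    obtain ⟨n, hn, _, ⟨y, hy, rfl⟩, hy'⟩ := hf W hW hne
    obtain ⟨x, hx, s, hs, hxs⟩ := ih (hW.inter (hW.preimage (hfc.iterate n))) ⟨y, hy, hy'⟩
    have h0 : 0 ∉ s.map (addLeftEmbedding n) := by
      simp only [Finset.mem_map, addLeftEmbedding_apply, not_exists, not_and]
      lia
    refine ⟨x, hx.1, insert 0 (s.map (addLeftEmbedding n)), ?_, ?_⟩
    · rw [Finset.card_insert_of_notMem h0, Finset.card_map, hs]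
    · refine (Finset.forall_mem_insert ..).2 ⟨hx.1, Finset.forall_mem_map.2 fun t ht => ?_⟩
      rw [addLeftEmbedding_apply, Function.iterate_add_apply]
      exact (hxs t ht).2

theorem NonWandering.of_semiconj {X Y ι : Type*} [TopologicalSpace X] [TopologicalSpace Y]
    {f : Y → Y} (hf : NonWandering f) (hfc : Continuous f) {q : X → Y} (hq : IsOpenMap q)
    {G : X → X} (hqG : Function.Semiconj q G f) {T : ι → X → X}
    (hT : ∀ k, Function.Commute (T k) G) (hfiber : ∀ ⦃x y⦄, q x = q y → ∃ k, y = T k x)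
    (hfin : ∀ a, ∃ V ∈ 𝓝 a, {k | ∃ x ∈ V, ∃ n, T k (G^[n] x) ∈ V}.Finite) :
    NonWandering G := by
  intro U hU ⟨a, ha⟩
  obtain ⟨V, hV, hVfin⟩ := hfin a
  obtain ⟨_, ⟨u, hu, rfl⟩, s, hs, hreturn⟩ := hf.exists_many_returns hfc
    (hVfin.toFinset.card + 1) (hq _ (hU.inter isOpen_interior))
    (Set.Nonempty.image q ⟨a, ha, mem_interior_iff_mem_nhds.2 hV⟩)
  have htranslate : ∀ t ∈ s, ∃ k ∈ hVfin.toFinset, T k (G^[t] u) ∈ U := by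
    intro t ht
    obtain ⟨v, hv, hvt⟩ := hreturn t ht
    rw [← (hqG.iterate_right t).eq] at hvt
    obtain ⟨k, rfl⟩ := hfiber hvt.symm
    exact ⟨k, hVfin.mem_toFinset.2 ⟨u, interior_subset hu.2, t, interior_subset hv.2⟩, hv.1⟩
  have : Nonempty ι := (hfiber (x := a) rfl).nonempty
  choose! k hk hkU using htranslate
  obtain ⟨t, ht, t', ht', hne, hkk⟩ := Finset.exists_ne_map_eq_of_card_lt_of_maps_to
    (hs ▸ Nat.lt_succ_self hVfin.toFinset.card) hk
  wlog hlt : t < t' generalizing t t'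
  · exact this t' ht' t ht hne.symm hkk.symm (by lia)
  refine ⟨t' - t, by lia, _, ⟨_, hkU t ht, rfl⟩, ?_⟩
  rw [← ((hT (k t)).iterate_right (t' - t)).eq, ← Function.iterate_add_apply,
    Nat.sub_add_cancel hlt.le, hkk]
  exact hkU t' ht'

theorem VertBounded.exists_nhds_finite_deckA_returns {G : Ann ≃ₜ Ann} (hb : VertBounded G)
    (a : Ann) : ∃ V ∈ 𝓝 a, {k | ∃ z ∈ V, ∃ n, deckA k (G^[n] z) ∈ V}.Finite := by
  obtain ⟨c, hc⟩ := hb.exists_iterate_bound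
  refine ⟨Prod.snd ⁻¹' Metric.ball a.2 1,
    continuous_snd.continuousAt (Metric.ball_mem_nhds a.2 one_pos),
    (Set.finite_Icc (-⌈c + 2⌉) ⌈c + 2⌉).subset ?_⟩
  rintro k ⟨z, hz, n, hn⟩
  rw [Set.mem_Icc, ← abs_le, ← Int.cast_le (R := ℝ), Int.cast_abs]
  refine le_trans ?_ (Int.le_ceil _)
  have hdisp := abs_le.1 (hc n z)
  simp only [Set.mem_preimage, Metric.mem_ball, Real.dist_eq, abs_lt, deckA] at hz hn
  exact abs_le.2 ⟨by linarith, by linarith⟩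

theorem IsLiftToAnn.nonWandering {f : Torus 2 ≃ₜ Torus 2} {G : Ann ≃ₜ Ann}
    (hG : IsLiftToAnn f G) (hb : VertBounded G) (hf : NonWandering f) : NonWandering G :=
  hf.of_semiconj f.continuous isOpenMap_tauA hG (hG.commute_deckA hb)
    (fun _ _ => tauA_eq_iff.1) hb.exists_nhds_finite_deckA_returns

end NonWandering

theorem statement16_general (f : Torus 2 ≃ₜ Torus 2) (F : Rd 2 ≃ₜ Rd 2)
    (hF : Function.Semiconj projT F f) (hnw : NonWandering f)
    (hbmm : BddMeanMotionParallelOn F (intVec ![0, 1]) 0 Set.univ) :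
    ∃ Ft : Ann ≃ₜ Ann, IsLiftToAnn f Ft ∧ VertBounded Ft ∧
      (∀ Ft' : Ann ≃ₜ Ann, IsLiftToAnn f Ft' → VertBounded Ft' → Ft' = Ft) ∧
      NonWandering Ft := by
  obtain ⟨Ft, hlift, hb⟩ := exists_isLiftToAnn_vertBounded hF hbmm
  exact ⟨Ft, hlift, hb, fun _ hlift' hb' => hlift'.eq_of_vertBounded hlift hb' hb,
    hlift.nonWandering hb hnw⟩

/-- **Lemma 3.8.**  If `f ∈ Homeo₀(𝕋²)` is non-wandering, `ρ(F) ⊆ ℝ × {0}` and `f` has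
bounded mean motion parallel to `e² = (0,1)`, then there is a unique lift `F̃` of `f`
to `𝔸` with uniformly bounded vertical displacements, and this lift is non-wandering. -/
theorem statement16 (f : Torus 2 ≃ₜ Torus 2) (F : Rd 2 ≃ₜ Rd 2) (hF : IsLift f F)
    (hnw : NonWandering (⇑f))
    (hrot : ∀ w ∈ rotSetOn F Set.univ, w 1 = 0)
    (hbmm : BddMeanMotionParallelOn F (intVec ![0, 1]) 0 Set.univ) :
    ∃ Ft : Ann ≃ₜ Ann, IsLiftToAnn f Ft ∧ VertBounded Ft ∧
      (∀ Ft' : Ann ≃ₜ Ann, IsLiftToAnn f Ft' → VertBounded Ft' → Ft' = Ft) ∧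
      NonWandering (⇑Ft) :=
  statement16_general f F hF.1 hnw hbmm
end
end
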